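/- Let (Y, dy) be a σ-finite measure space, β > 0, ρ : X × Y → [0,∞) a distortion measure, and M > 0 with ∫_Y e^{-βρ(x,y)} dy < M for every x ∈ X. Let E*, Ê : Y → ℝ be measurable with E*(y) ≥ 0 for all y, let 0 < ξ < log 2 satisfy |E*(y) − Ê(y)| < ξ for all y ∈ Y, and suppose Z* = ∫_Y e^{-E*(y)} dy ∈ (0, ∞). Let q* and q̂ be the Boltzmann densities of E* and Ê respectively. Then for every x ∈ X, | ∫_Y q*(y) e^{-βρ(x,y)} dy − ∫_Y q̂(y) e^{-βρ(x,y)} dy | ≤ 2M(e^{ξ} − 1) / ((2 − e^{ξ}) Z*). -/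

import Mathlib

open MeasureTheory

/-!
Energies that differ by at most `ξ` have Boltzmann weights, and hence partition functions, that
differ by a factor of at most `e^ξ`. The densities therefore agree up to a factor `e^{2ξ}`, so
`|q* - q̂| ≤ (e^{2ξ} - 1) q* ≤ (e^{2ξ} - 1) / Z*` as soon as `E* ≥ 0`, and one integrates this
pointwise bound. For `ξ < log 2` it is sharper than the rational bound, since with `t = e^ξ ≥ 1`
one has `(t + 1) (2 - t) ≤ 2`.
-/

section BoltzmannDensity

open Real

variable {Y G : Type*} [MeasurableSpace Y] {μ : Measure Y} [NormedAddCommGroup G] [NormedSpace ℝ G]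
  {E F : Y → ℝ} {ξ : ℝ}

/-- The Boltzmann (Gibbs) density with respect to `μ` of the energy `E`, at inverse temperature
one. If `exp (-E)` is not integrable, the partition function in the denominator is `0` by
convention, and so is the density. -/
noncomputable def boltzmannDensity (μ : Measure Y) (E : Y → ℝ) (y : Y) : ℝ :=
  exp (-E y) / ∫ y', exp (-E y') ∂μ

lemma abs_sub_le_of_le_mul_of_le_mul {a b c : ℝ} (hc : 1 ≤ c) (hab : a ≤ c * b) (hba : b ≤ c * a) :
    |a - b| ≤ (c - 1) * a := by
  rcases le_total a b with h | h
  · rw [abs_of_nonpos (sub_nonpos.2 h)]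
    linarith
  · calc |a - b| = a - b := abs_of_nonneg (sub_nonneg.2 h)
      _ ≤ (c - 1) * b := by linarith
      _ ≤ (c - 1) * a := mul_le_mul_of_nonneg_left h (sub_nonneg.2 hc)

lemma exp_two_mul_sub_one_le (hξ : 0 ≤ ξ) (hξ_lt : ξ < log 2) :
    exp (2 * ξ) - 1 ≤ 2 * (exp ξ - 1) / (2 - exp ξ) := by
  have one_le : 1 ≤ exp ξ := one_le_exp hξ
  have lt_two : exp ξ < 2 := (lt_log_iff_exp_lt two_pos).1 hξ_lt
  rw [le_div_iff₀ (sub_pos.2 lt_two), two_mul, exp_add]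
  calc (exp ξ * exp ξ - 1) * (2 - exp ξ)
      = (exp ξ - 1) * ((exp ξ + 1) * (2 - exp ξ)) := by ring
    _ ≤ (exp ξ - 1) * 2 := by
        gcongr
        nlinarith
    _ = 2 * (exp ξ - 1) := mul_comm _ _

lemma exp_neg_le_exp_mul_exp_neg {a b : ℝ} (h : a - b ≤ ξ) : exp (-b) ≤ exp ξ * exp (-a) := by
  rw [← exp_add, exp_le_exp]
  linarith

lemma integrable_exp_neg_of_sub_le (hE : Integrable (fun y => exp (-E y)) μ)
    (hF : AEMeasurable F μ) (h : ∀ᵐ y ∂μ, E y - F y ≤ ξ) :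
    Integrable (fun y => exp (-F y)) μ := by
  refine (hE.const_mul (exp ξ)).mono' hF.neg.exp.aestronglyMeasurable ?_
  filter_upwards [h] with y hy
  rw [norm_of_nonneg (exp_pos _).le]
  exact exp_neg_le_exp_mul_exp_neg hy

lemma integral_exp_neg_le_of_sub_le (hE : Integrable (fun y => exp (-E y)) μ)
    (h : ∀ᵐ y ∂μ, E y - F y ≤ ξ) :
    ∫ y, exp (-F y) ∂μ ≤ exp ξ * ∫ y, exp (-E y) ∂μ := by
  rw [← integral_const_mul]
  exact integral_mono_of_nonneg (.of_forall fun y => (exp_pos _).le) (hE.const_mul _)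
    (h.mono fun y => exp_neg_le_exp_mul_exp_neg)

lemma boltzmannDensity_nonneg (μ : Measure Y) (E : Y → ℝ) (y : Y) : 0 ≤ boltzmannDensity μ E y :=
  div_nonneg (exp_pos _).le (integral_nonneg fun _ => (exp_pos _).le)

lemma boltzmannDensity_le_inv {y : Y} (hy : 0 ≤ E y) :
    boltzmannDensity μ E y ≤ (∫ y', exp (-E y') ∂μ)⁻¹ := by
  rw [boltzmannDensity, div_eq_mul_inv]
  exact mul_le_of_le_one_left (inv_nonneg.2 (integral_nonneg fun _ => (exp_pos _).le))
    (exp_le_one_iff.2 (neg_nonpos.2 hy))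

lemma integrable_boltzmannDensity (hE : Integrable (fun y => exp (-E y)) μ) :
    Integrable (boltzmannDensity μ E) μ :=
  hE.div_const _

lemma boltzmannDensity_le_exp_mul [NeZero μ] (hE : Integrable (fun y => exp (-E y)) μ)
    (hF : Integrable (fun y => exp (-F y)) μ) (h : ∀ᵐ y ∂μ, |E y - F y| ≤ ξ) :
    ∀ᵐ y ∂μ, boltzmannDensity μ F y ≤ exp (2 * ξ) * boltzmannDensity μ E y := by
  have partition_le : ∫ y, exp (-E y) ∂μ ≤ exp ξ * ∫ y, exp (-F y) ∂μ :=
    integral_exp_neg_le_of_sub_le hF <| h.mono fun y hy => (abs_sub_le_iff.1 hy).2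
  have partition_pos : 0 < ∫ y, exp (-E y) ∂μ := integral_exp_pos hE
  filter_upwards [h] with y hy
  calc exp (-F y) / ∫ y', exp (-F y') ∂μ
      = exp ξ * exp (-F y) / (exp ξ * ∫ y', exp (-F y') ∂μ) :=
        (mul_div_mul_left _ _ (exp_ne_zero ξ)).symm
    _ ≤ exp ξ * (exp ξ * exp (-E y)) / ∫ y', exp (-E y') ∂μ := by
        gcongr
        exact exp_neg_le_exp_mul_exp_neg (abs_sub_le_iff.1 hy).1
    _ = exp (2 * ξ) * boltzmannDensity μ E y := by
        rw [boltzmannDensity, two_mul, exp_add]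
        ring

lemma abs_boltzmannDensity_sub_le [NeZero μ] (hE : Integrable (fun y => exp (-E y)) μ)
    (hF : Integrable (fun y => exp (-F y)) μ) (h : ∀ᵐ y ∂μ, |E y - F y| ≤ ξ) :
    ∀ᵐ y ∂μ, |boltzmannDensity μ E y - boltzmannDensity μ F y|
      ≤ (exp (2 * ξ) - 1) * boltzmannDensity μ E y := by
  have h_symm : ∀ᵐ y ∂μ, |F y - E y| ≤ ξ := by simpa only [abs_sub_comm] using h
  filter_upwards [h, boltzmannDensity_le_exp_mul hE hF h, boltzmannDensity_le_exp_mul hF hE h_symm]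
    with y hy hFE hEF
  have hξ : 0 ≤ ξ := (abs_nonneg _).trans hy
  exact abs_sub_le_of_le_mul_of_le_mul (one_le_exp (by positivity)) hEF hFE

lemma norm_integral_smul_sub_integral_smul_le {p q : Y → ℝ} {f : Y → G} {B C : ℝ}
    (hp : AEStronglyMeasurable p μ) (hq : AEStronglyMeasurable q μ) (hf : Integrable f μ)
    (hp_le : ∀ᵐ y ∂μ, |p y| ≤ B) (hpq : ∀ᵐ y ∂μ, |p y - q y| ≤ C) :
    ‖∫ y, p y • f y ∂μ - ∫ y, q y • f y ∂μ‖ ≤ C * ∫ y, ‖f y‖ ∂μ := by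
  have hpf : Integrable (fun y => p y • f y) μ := hf.bdd_smul B hp hp_le
  have hdiff : Integrable (fun y => (p y - q y) • f y) μ := hf.bdd_smul C (hp.sub hq) hpq
  have hqf : Integrable (fun y => q y • f y) μ := by
    simpa only [sub_smul, Pi.sub_def, sub_sub_cancel] using hpf.sub hdiff
  rw [← integral_sub hpf hqf, ← integral_const_mul]
  refine norm_integral_le_of_norm_le (hf.norm.const_mul C) (hpq.mono fun y hy => ?_)
  rw [← sub_smul, norm_smul]
  gcongr
  exact hy

theorem inner_integral_perturbation_general [NeZero μ] {f : Y → G} (hf : Integrable f μ)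
    (hE_nonneg : ∀ᵐ y ∂μ, 0 ≤ E y) (hE : Integrable (fun y => exp (-E y)) μ)
    (hF : AEMeasurable F μ) (h : ∀ᵐ y ∂μ, |E y - F y| ≤ ξ) :
    ‖∫ y, boltzmannDensity μ E y • f y ∂μ - ∫ y, boltzmannDensity μ F y • f y ∂μ‖
      ≤ (exp (2 * ξ) - 1) / (∫ y, exp (-E y) ∂μ) * ∫ y, ‖f y‖ ∂μ := by
  have hF_int : Integrable (fun y => exp (-F y)) μ :=
    integrable_exp_neg_of_sub_le hE hF <| h.mono fun y hy => (abs_sub_le_iff.1 hy).1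
  refine norm_integral_smul_sub_integral_smul_le (B := (∫ y, exp (-E y) ∂μ)⁻¹)
    (integrable_boltzmannDensity hE).aestronglyMeasurable
    (integrable_boltzmannDensity hF_int).aestronglyMeasurable hf ?_ ?_
  · filter_upwards [hE_nonneg] with y hy
    rw [abs_of_nonneg (boltzmannDensity_nonneg μ E y)]
    exact boltzmannDensity_le_inv hy
  · filter_upwards [hE_nonneg, h, abs_boltzmannDensity_sub_le hE hF_int h] with y hy hξ hdiff
    have hξ_nonneg : 0 ≤ ξ := (abs_nonneg _).trans hξ
    have factor_nonneg : 0 ≤ exp (2 * ξ) - 1 := sub_nonneg.2 (one_le_exp (by positivity))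
    exact hdiff.trans (mul_le_mul_of_nonneg_left (boltzmannDensity_le_inv hy) factor_nonneg)

end BoltzmannDensity

/-- Under the standing assumption `∫ e^{-βρ(x,y)} dμ(y) < M` for all `x`,
with `E* ≥ 0`, `0 < ξ < log 2`, `|E* − Ê| < ξ` pointwise and `Z* = ∫ e^{-E*} dμ ∈ (0,∞)`,
the Boltzmann densities `q*`, `q̂` of `E*`, `Ê` satisfy, for every `x`,
`|∫ q*(y)e^{-βρ(x,y)}dμ(y) − ∫ q̂(y)e^{-βρ(x,y)}dμ(y)| ≤ 2M(e^ξ − 1)/((2 − e^ξ)·Z*)`. -/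
theorem inner_integral_perturbation
    {X Y : Type*} [MeasurableSpace Y] (μ : Measure Y) [SigmaFinite μ]
    (β : ℝ) (hβ : 0 < β)
    (ρ : X → Y → ℝ) (hρ : ∀ x y, 0 ≤ ρ x y)
    (M : ℝ) (hM : 0 < M)
    (hρ_int : ∀ x, Integrable (fun y => Real.exp (-(β * ρ x y))) μ)
    (hρ_bound : ∀ x, (∫ y, Real.exp (-(β * ρ x y)) ∂μ) < M)
    (Estar Ehat : Y → ℝ) (hEstar_meas : Measurable Estar) (hEhat_meas : Measurable Ehat)
    (hEstar_nonneg : ∀ y, 0 ≤ Estar y)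
    (ξ : ℝ) (hξ_pos : 0 < ξ) (hξ_lt : ξ < Real.log 2)
    (happrox : ∀ y, |Estar y - Ehat y| < ξ)
    (hZstar_int : Integrable (fun y => Real.exp (-Estar y)) μ)
    (hZstar_pos : 0 < ∫ y, Real.exp (-Estar y) ∂μ) :
    ∀ x, |(∫ y, (Real.exp (-Estar y) / (∫ y', Real.exp (-Estar y') ∂μ))
            * Real.exp (-(β * ρ x y)) ∂μ)
        - ∫ y, (Real.exp (-Ehat y) / (∫ y', Real.exp (-Ehat y') ∂μ))
            * Real.exp (-(β * ρ x y)) ∂μ|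
      ≤ 2 * M * (Real.exp ξ - 1)
        / ((2 - Real.exp ξ) * ∫ y', Real.exp (-Estar y') ∂μ) := by
  intro x
  have : NeZero μ := ⟨by rintro rfl; simp at hZstar_pos⟩
  have factor_nonneg : 0 ≤ Real.exp (2 * ξ) - 1 := sub_nonneg.2 (Real.one_le_exp (by positivity))
  calc
    _ ≤ (Real.exp (2 * ξ) - 1) / (∫ y, Real.exp (-Estar y) ∂μ)
          * ∫ y, ‖Real.exp (-(β * ρ x y))‖ ∂μ :=
        inner_integral_perturbation_general (hρ_int x) (.of_forall hEstar_nonneg) hZstar_int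
          hEhat_meas.aemeasurable (.of_forall fun y => (happrox y).le)
    _ ≤ (Real.exp (2 * ξ) - 1) / (∫ y, Real.exp (-Estar y) ∂μ) * M := by
        simp only [Real.norm_eq_abs, Real.abs_exp]
        gcongr
        exact (hρ_bound x).le
    _ ≤ 2 * (Real.exp ξ - 1) / (2 - Real.exp ξ) / (∫ y, Real.exp (-Estar y) ∂μ) * M := by
        gcongr
        exact exp_two_mul_sub_one_le hξ_pos.le hξ_lt
    _ = _ := by rw [div_div, div_mul_eq_mul_div, mul_right_comm]
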